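/- arXiv:2402.08484 — 5 statements merged into one kernel-verified Lean document; each statement's English description precedes it below -/
import Mathlib

section
/- (Sperner's lemma for the triangle.) Let N ≥ 1 and let c : V_N → {1,2,3} be a Sperner coloring, i.e. c(v) ≠ i whenever v_i = 0. Then the triangulation has a trichromatic cell: either there exists u ∈ ℤ³ with u_i ≥ 0 for all i and u₁+u₂+u₃ = N−1 such that c(u+e¹), c(u+e²), c(u+e³) are pairwise distinct, or there exists u ∈ ℤ³ with u_i ≥ 1 for all i and u₁+u₂+u₃ = N+1 such that c(u−e¹), c(u−e²), c(u−e³) are pairwise distinct. -/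
/-!
Orient the edges of the triangulation and give the edge `v → v'` the weight
`spernerWeight (c v) (c v')`, which is `1` if the colors go from `2` to `0`, `-1` if they go from
`0` to `2`, and `0` otherwise. The weight is antisymmetric, so it sums to zero around any cell
that is not trichromatic (`spernerWeight_cycle`).

Suppose no cell is trichromatic. On the left side (`v 0 = 0`) and on the hypotenuse (`v 2 = 0`)
one of the colors `0`, `2` is forbidden, so these edges have weight zero. Summing over the cells of
the horizontal strip between heights `j` and `j + 1` (`strip_partial`), the total weight of the row
at height `j` equals that of the row at height `j + 1`. Hence the bottom row has the same
total as the degenerate top row, which is zero. But on the bottom row only the colors `0` and `2`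
occur and its ends have colors `2` and `0`, so its total telescopes to `1`
(`bottom_row`), a contradiction.
-/

/-- `V_N`: the vertex set of the unit triangulation of `NΔ₂`. -/
def VN (N : ℕ) : Set (Fin 3 → ℤ) :=
  {v | (∀ i, 0 ≤ v i) ∧ ∑ i : Fin 3, v i = (N : ℤ)}

/-- A Sperner coloring of `V_N`: `c v ≠ i` whenever `v i = 0`. -/
def IsSpernerColoring (N : ℕ) (c : (Fin 3 → ℤ) → Fin 3) : Prop :=
  ∀ v ∈ VN N, ∀ i : Fin 3, v i = 0 → c v ≠ i

/-- The signed indicator that an edge passes from color `2` to color `0`. -/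
def spernerWeight (a b : Fin 3) : ℤ :=
  if a = 2 ∧ b = 0 then 1 else if a = 0 ∧ b = 2 then -1 else 0

lemma spernerWeight_cycle (g : Fin 3 → Fin 3) (hg : ¬ Function.Injective g) :
    spernerWeight (g 0) (g 1) + spernerWeight (g 1) (g 2) + spernerWeight (g 2) (g 0) = 0 := by
  revert g
  unfold spernerWeight
  decide

lemma spernerWeight_comm (a b : Fin 3) : spernerWeight a b = -spernerWeight b a := by
  revert a b
  unfold spernerWeight
  decide

lemma spernerWeight_of_ne_zero (a b : Fin 3) (ha : a ≠ 0) (hb : b ≠ 0) :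
    spernerWeight a b = 0 := by
  simp [spernerWeight, ha, hb]

lemma spernerWeight_of_ne_two (a b : Fin 3) (ha : a ≠ 2) (hb : b ≠ 2) :
    spernerWeight a b = 0 := by
  simp [spernerWeight, ha, hb]

/-- Without color `1` the weight is a coboundary. -/
lemma spernerWeight_of_ne_one (a b : Fin 3) (ha : a ≠ 1) (hb : b ≠ 1) :
    spernerWeight a b = (if b = 0 then 1 else 0) - (if a = 0 then 1 else 0) := by
  revert a b
  unfold spernerWeight
  decide

/-- The total weight of the first `k` edges of the row at height `j`. -/
def rowWeight (f : ℕ → ℕ → Fin 3) (j k : ℕ) : ℤ :=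
  ∑ i ∈ Finset.range k, spernerWeight (f i j) (f (i + 1) j)

/-- The weight sums to zero around the parallelogram formed by the first `2 * k` cells of the strip
between heights `j` and `j + 1`. -/
lemma strip_partial (N : ℕ) (f : ℕ → ℕ → Fin 3)
    (hup : ∀ i j, i + j + 1 ≤ N → spernerWeight (f (i + 1) j) (f i (j + 1)) +
      spernerWeight (f i (j + 1)) (f i j) + spernerWeight (f i j) (f (i + 1) j) = 0)
    (hdown : ∀ i j, i + j + 2 ≤ N → spernerWeight (f i (j + 1)) (f (i + 1) j) +
      spernerWeight (f (i + 1) j) (f (i + 1) (j + 1)) +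
      spernerWeight (f (i + 1) (j + 1)) (f i (j + 1)) = 0)
    (j k : ℕ) (hk : k + j + 1 ≤ N) :
    rowWeight f j k + spernerWeight (f k j) (f k (j + 1)) =
      spernerWeight (f 0 j) (f 0 (j + 1)) + rowWeight f (j + 1) k := by
  induction k with
  | zero => simp [rowWeight]
  | succ k ih =>
    have h := ih (by omega)
    have h1 := hup k j (by omega)
    have h2 := hdown k j (by omega)
    have h3 := spernerWeight_comm (f (k + 1) j) (f k (j + 1))
    have h4 := spernerWeight_comm (f k (j + 1)) (f k j)
    have h5 := spernerWeight_comm (f (k + 1) (j + 1)) (f k (j + 1))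
    simp only [rowWeight, Finset.sum_range_succ] at h ⊢
    linarith

lemma bottom_row (f : ℕ → ℕ → Fin 3) (k : ℕ) (hbot : ∀ i ≤ k, f i 0 ≠ 1) :
    rowWeight f 0 k = (if f k 0 = 0 then 1 else 0) - (if f 0 0 = 0 then 1 else 0) := by
  rw [rowWeight, ← Finset.sum_range_sub (fun i => if f i 0 = 0 then (1 : ℤ) else 0)]
  refine Finset.sum_congr rfl fun i hi => ?_
  have hi' := Finset.mem_range.1 hi
  exact spernerWeight_of_ne_one _ _ (hbot i (by omega)) (hbot (i + 1) (by omega))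

/-- Sperner's lemma in the planar coordinates `(i, j)` of the vertex `(i, j, N - i - j)`: the cell
relations and the three boundary conditions are incompatible. -/
lemma no_zero_weight_cells (N : ℕ) (f : ℕ → ℕ → Fin 3)
    (hup : ∀ i j, i + j + 1 ≤ N → spernerWeight (f (i + 1) j) (f i (j + 1)) +
      spernerWeight (f i (j + 1)) (f i j) + spernerWeight (f i j) (f (i + 1) j) = 0)
    (hdown : ∀ i j, i + j + 2 ≤ N → spernerWeight (f i (j + 1)) (f (i + 1) j) +
      spernerWeight (f (i + 1) j) (f (i + 1) (j + 1)) +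
      spernerWeight (f (i + 1) (j + 1)) (f i (j + 1)) = 0)
    (hleft : ∀ j ≤ N, f 0 j ≠ 0) (hbot : ∀ i ≤ N, f i 0 ≠ 1)
    (hhyp : ∀ i j, i + j = N → f i j ≠ 2) : False := by
  have hstep : ∀ j k, k + j = N → rowWeight f j k = 0 := by
    intro j k
    induction k generalizing j with
    | zero => simp [rowWeight]
    | succ k ih =>
      intro hk
      have h0 := ih (j + 1) (by omega)
      have h1 := strip_partial N f hup hdown j k (by omega)
      have h2 := hup k j (by omega)
      have h3 := spernerWeight_of_ne_two _ _ (hhyp (k + 1) j hk) (hhyp k (j + 1) (by omega))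
      have h4 := spernerWeight_of_ne_zero _ _ (hleft j (by omega)) (hleft (j + 1) (by omega))
      have h5 := spernerWeight_comm (f k (j + 1)) (f k j)
      have h6 : rowWeight f j (k + 1) =
          rowWeight f j k + spernerWeight (f k j) (f (k + 1) j) := Finset.sum_range_succ _ _
      linarith
  have h := bottom_row f N hbot
  have hN0 : f N 0 = 0 := by
    have h1 := hbot N le_rfl
    have h2 := hhyp N 0 rfl
    omega
  rw [hstep 0 N rfl, if_pos hN0, if_neg (hleft 0 (Nat.zero_le N))] at h
  norm_num at h

/-- Sperner's lemma for the triangle: every Sperner coloring of the unit triangulation of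
`NΔ₂` admits a trichromatic cell — either an upward cell `{u+e¹, u+e², u+e³}` with `u ≥ 0`
and `∑ u = N-1`, or a downward cell `{u−e¹, u−e², u−e³}` with `u ≥ 1` and `∑ u = N+1`,
whose three vertices receive pairwise distinct colors. -/
theorem sperner_triangle (N : ℕ) (hN : 1 ≤ N) (c : (Fin 3 → ℤ) → Fin 3)
    (hc : IsSpernerColoring N c) :
    (∃ u : Fin 3 → ℤ, (∀ i, 0 ≤ u i) ∧ (∑ i : Fin 3, u i = (N : ℤ) - 1) ∧
      Function.Injective (fun i : Fin 3 => c (u + Pi.single i 1))) ∨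
    (∃ u : Fin 3 → ℤ, (∀ i, 1 ≤ u i) ∧ (∑ i : Fin 3, u i = (N : ℤ) + 1) ∧
      Function.Injective (fun i : Fin 3 => c (u - Pi.single i 1))) := by
  by_contra hcon
  rw [not_or] at hcon
  obtain ⟨hU, hD⟩ := hcon
  push Not at hU hD
  have hmem : ∀ i j : ℕ, i + j ≤ N → (![(i : ℤ), j, N - i - j] : Fin 3 → ℤ) ∈ VN N := by
    intro i j hij
    refine ⟨fun k => ?_, by simp [Fin.sum_univ_three]⟩
    fin_cases k <;> simp
    omega
  refine no_zero_weight_cells N (fun i j => c ![(i : ℤ), j, N - i - j]) ?_ ?_ ?_ ?_ ?_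
  · intro i j hij
    have h := spernerWeight_cycle _ (hU ![(i : ℤ), j, N - 1 - i - j]
      (fun k => by fin_cases k <;> simp; omega) (by simp [Fin.sum_univ_three]))
    have e0 : (![(i : ℤ), j, N - 1 - i - j] + Pi.single 0 1 : Fin 3 → ℤ) =
        ![((i + 1 : ℕ) : ℤ), j, N - (i + 1 : ℕ) - j] := by
      ext k; fin_cases k <;> simp; ring
    have e1 : (![(i : ℤ), j, N - 1 - i - j] + Pi.single 1 1 : Fin 3 → ℤ) =
        ![(i : ℤ), (j + 1 : ℕ), N - i - (j + 1 : ℕ)] := by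
      ext k; fin_cases k <;> simp; ring
    have e2 : (![(i : ℤ), j, N - 1 - i - j] + Pi.single 2 1 : Fin 3 → ℤ) =
        ![(i : ℤ), j, N - i - j] := by
      ext k; fin_cases k <;> simp; ring
    simpa only [e0, e1, e2] using h
  · intro i j hij
    have h := spernerWeight_cycle _ (hD ![(i : ℤ) + 1, j + 1, N - 1 - i - j]
      (fun k => by fin_cases k <;> simp; omega) (by simp [Fin.sum_univ_three]; ring))
    have e0 : (![(i : ℤ) + 1, j + 1, N - 1 - i - j] - Pi.single 0 1 : Fin 3 → ℤ) =
        ![(i : ℤ), (j + 1 : ℕ), N - i - (j + 1 : ℕ)] := by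
      ext k; fin_cases k <;> simp; ring
    have e1 : (![(i : ℤ) + 1, j + 1, N - 1 - i - j] - Pi.single 1 1 : Fin 3 → ℤ) =
        ![((i + 1 : ℕ) : ℤ), j, N - (i + 1 : ℕ) - j] := by
      ext k; fin_cases k <;> simp; ring
    have e2 : (![(i : ℤ) + 1, j + 1, N - 1 - i - j] - Pi.single 2 1 : Fin 3 → ℤ) =
        ![((i + 1 : ℕ) : ℤ), (j + 1 : ℕ), N - (i + 1 : ℕ) - (j + 1 : ℕ)] := by
      ext k; fin_cases k <;> simp; ring
    simpa only [e0, e1, e2] using h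
  · intro j hj
    exact hc _ (hmem 0 j (by omega)) 0 (by simp)
  · intro i hi
    exact hc _ (hmem i 0 (by omega)) 1 (by simp)
  · intro i j hij
    refine hc _ (hmem i j (by omega)) 2 ?_
    simp
    omega
end

section
/- Let N ≥ 1 and let c : V_N → {1,2,3} be a Sperner coloring. For i ∈ {1,2,3} define C_i := {x ∈ NΔ₂ : c(v) = i for some v ∈ V_N attaining min_{w ∈ V_N} ‖x − w‖₁}. Then (C_1, C_2, C_3) is a KKM covering of NΔ₂: each C_i is closed, and for every nonempty S ⊆ {1,2,3}, conv{N·e^i : i ∈ S} ⊆ ∪_{i∈S} C_i. -/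
/-- `NΔ₂`: the triangle with vertices `N·e¹, N·e², N·e³`. -/
def NDelta2 (N : ℕ) : Set (Fin 3 → ℝ) :=
  {x | (∀ i, 0 ≤ x i) ∧ ∑ i : Fin 3, x i = (N : ℝ)}

/-- The `L¹` distance from a real point to an integer vertex. -/
def dist1 (x : Fin 3 → ℝ) (v : Fin 3 → ℤ) : ℝ :=
  ∑ i : Fin 3, |x i - (v i : ℝ)|

/-- `C_i`: the points of `NΔ₂` having an `i`-colored closest vertex (in `L¹` distance). -/
def coverSet (N : ℕ) (c : (Fin 3 → ℤ) → Fin 3) (i : Fin 3) : Set (Fin 3 → ℝ) :=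
  {x | x ∈ NDelta2 N ∧ ∃ v ∈ VN N, (∀ w ∈ VN N, dist1 x v ≤ dist1 x w) ∧ c v = i}

lemma VN_finite (N : ℕ) : (VN N).Finite := by
  refine (Set.finite_Icc (0 : Fin 3 → ℤ) (fun _ => (N : ℤ))).subset ?_
  rintro v ⟨h0, hs⟩
  refine ⟨h0, fun i => ?_⟩
  rw [← hs]
  exact Finset.single_le_sum (fun j _ => h0 j) (Finset.mem_univ i)

lemma exists_nearest (N : ℕ) (x : Fin 3 → ℝ) :
    ∃ v ∈ VN N, ∀ w ∈ VN N, dist1 x v ≤ dist1 x w := by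
  have hne : (VN N).Nonempty := by
    refine ⟨Pi.single 0 (N : ℤ), fun i => ?_, by simp⟩
    fin_cases i <;> simp
  exact Set.exists_min_image (VN N) (dist1 x) (VN_finite N) hne

/-- Nearest vertices stay on the face of the point: a vertex `v` with `v j ≥ 1` and `x j = 0` is
beaten by `v + eⁱ - eʲ` for any `i` with `v i < x i`. -/
lemma eq_zero_of_nearest {N : ℕ} {x : Fin 3 → ℝ} (hx : x ∈ NDelta2 N) {v : Fin 3 → ℤ}
    (hv : v ∈ VN N) (hmin : ∀ w ∈ VN N, dist1 x v ≤ dist1 x w) {j : Fin 3} (hj : x j = 0) :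
    v j = 0 := by
  obtain ⟨-, hxs⟩ := hx
  obtain ⟨hv0, hvs⟩ := hv
  by_contra hne
  have hvj : 1 ≤ v j := by have := hv0 j; omega
  have hvjR : (1 : ℝ) ≤ v j := by exact_mod_cast hvj
  obtain ⟨i, hi⟩ : ∃ i, (v i : ℝ) < x i := by
    by_contra! hle
    have hlt : ∑ i, x i < ∑ i, (v i : ℝ) :=
      Finset.sum_lt_sum (fun i _ => hle i) ⟨j, Finset.mem_univ j, by linarith⟩
    have hvsR : ∑ i, (v i : ℝ) = (N : ℝ) := by exact_mod_cast hvs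
    linarith
  have hij : i ≠ j := by
    rintro rfl
    linarith
  have hw : v + Pi.single i 1 - Pi.single j 1 ∈ VN N := by
    refine ⟨fun k => ?_, ?_⟩
    · have := hv0 k
      by_cases hkj : k = j
      · subst hkj
        simp [hij.symm]
        omega
      · by_cases hki : k = i
        · subst hki
          simp [hkj]
          omega
        · simpa [hkj, hki] using this
    · simp [Finset.sum_add_distrib, hvs]
  have hle := hmin _ hw
  have hj1 : |x j - (v j : ℝ)| = v j := by
    rw [hj, zero_sub, abs_neg, abs_of_nonneg (by linarith)]
  have hj2 : |x j - ((v j : ℝ) - 1)| = v j - 1 := by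
    rw [hj, zero_sub, abs_neg, abs_of_nonneg (by linarith)]
  have hi2 : |x i - ((v i : ℝ) + 1)| < |x i - (v i : ℝ)| + 1 := by
    rw [abs_of_pos (sub_pos.mpr hi)]
    exact abs_lt.mpr ⟨by linarith, by linarith⟩
  unfold dist1 at hle
  rw [Fin.sum_univ_three, Fin.sum_univ_three] at hle
  fin_cases i <;> fin_cases j <;> simp at hij hle hj1 hj2 hi2 <;> linarith

lemma isClosed_NDelta2 (N : ℕ) : IsClosed (NDelta2 N) := by
  have h : NDelta2 N = (⋂ i, {x : Fin 3 → ℝ | 0 ≤ x i}) ∩ {x | ∑ i, x i = (N : ℝ)} := by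
    ext x
    simp [NDelta2]
  rw [h]
  exact (isClosed_iInter fun i => isClosed_le (by fun_prop) (by fun_prop)).inter
    (isClosed_eq (by fun_prop) (by fun_prop))

lemma continuous_dist1 (v : Fin 3 → ℤ) : Continuous fun x => dist1 x v := by
  unfold dist1
  fun_prop

/-- `C_i` is the finite union, over the vertices `v` of color `i`, of the closed `L¹` Voronoi cells
of `v` in `NΔ₂`. -/
lemma isClosed_coverSet (N : ℕ) (c : (Fin 3 → ℤ) → Fin 3) (i : Fin 3) :
    IsClosed (coverSet N c i) := by
  have h : coverSet N c i = NDelta2 N ∩ ⋃ v ∈ {v | v ∈ VN N ∧ c v = i},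
      ⋂ w ∈ VN N, {x | dist1 x v ≤ dist1 x w} := by
    ext x
    simp only [coverSet, Set.mem_ofPred_eq, Set.mem_inter_iff, Set.mem_iUnion, Set.mem_iInter,
      exists_prop]
    grind
  rw [h]
  refine (isClosed_NDelta2 N).inter (Set.Finite.isClosed_biUnion ?_ fun v _ => ?_)
  · exact (VN_finite N).subset fun v hv => hv.1
  · exact isClosed_biInter fun w _ => isClosed_le (continuous_dist1 v) (continuous_dist1 w)

lemma convexHull_subset_face (N : ℕ) (S : Finset (Fin 3)) :
    convexHull ℝ {y : Fin 3 → ℝ | ∃ i ∈ S, y = (N : ℝ) • (Pi.single i (1 : ℝ) : Fin 3 → ℝ)} ⊆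
      {x | x ∈ NDelta2 N ∧ ∀ j ∉ S, x j = 0} := by
  refine convexHull_min ?_ ?_
  · rintro y ⟨i, hi, rfl⟩
    refine ⟨⟨fun k => ?_, ?_⟩, fun j hj => ?_⟩
    · by_cases hk : k = i
      · subst hk
        simp
      · simp [hk]
    · simp [← Finset.mul_sum]
    · have hji : j ≠ i := by
        rintro rfl
        exact hj hi
      simp [hji]
  · rintro x ⟨⟨hx0, hxs⟩, hxS⟩ y ⟨⟨hy0, hys⟩, hyS⟩ a b ha hb hab
    refine ⟨⟨fun k => ?_, ?_⟩, fun j hj => ?_⟩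
    · have := mul_nonneg ha (hx0 k)
      have := mul_nonneg hb (hy0 k)
      simp only [Pi.add_apply, Pi.smul_apply, smul_eq_mul]
      linarith
    · simp only [Pi.add_apply, Pi.smul_apply, smul_eq_mul, Finset.sum_add_distrib,
        ← Finset.mul_sum, hxs, hys]
      rw [← add_mul, hab, one_mul]
    · simp [hxS j hj, hyS j hj]

/-- The sets `C_1, C_2, C_3` built from a Sperner coloring form a KKM covering of `NΔ₂`:
each `C_i` is closed and `conv {N·e^i : i ∈ S} ⊆ ∪_{i∈S} C_i` for every nonempty `S`. -/
theorem sperner_coloring_gives_kkm_covering (N : ℕ) (hN : 1 ≤ N)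
    (c : (Fin 3 → ℤ) → Fin 3) (hc : IsSpernerColoring N c) :
    (∀ i, IsClosed (coverSet N c i)) ∧
      ∀ S : Finset (Fin 3), S.Nonempty →
        convexHull ℝ {y : Fin 3 → ℝ | ∃ i ∈ S, y = (N : ℝ) • (Pi.single i (1 : ℝ) : Fin 3 → ℝ)} ⊆
          ⋃ i ∈ S, coverSet N c i := by
  refine ⟨isClosed_coverSet N c, fun S _ x hx => ?_⟩
  obtain ⟨hxN, hxS⟩ := convexHull_subset_face N S hx
  obtain ⟨v, hv, hmin⟩ := exists_nearest N x
  have hcS : c v ∈ S := by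
    by_contra hcv
    exact hc v hv (c v) (eq_zero_of_nearest hxN hv hmin (hxS _ hcv)) rfl
  exact Set.mem_biUnion hcS ⟨hxN, v, hv, hmin, rfl⟩
end

section
/- Let N ≥ 1, let c : V_N → {1,2,3} be a Sperner coloring, and for i ∈ {1,2,3} define C_i := {x ∈ NΔ₂ : c(v) = i for some v ∈ V_N attaining min_{w ∈ V_N} ‖x − w‖₁}. Suppose x ∈ NΔ₂ is such that for each i ∈ {1,2,3} there exists x^i ∈ C_i with ‖x − x^i‖₁ ≤ 1/8. Then there is a trichromatic cell of the triangulation with vertices v¹, v², v³ such that c(v¹), c(v²), c(v³) are pairwise distinct and x lies in the interior of that cell, i.e. x = λ₁v¹ + λ₂v² + λ₃v³ with λ₁, λ₂, λ₃ > 0 and λ₁+λ₂+λ₃ = 1. -/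
/-- `v` enumerates the vertices of a cell of the triangulation of `NΔ₂`: either an upward
cell `v i = u + e^i`, or a downward cell `v i = u - e^i`. -/
def IsCell (N : ℕ) (v : Fin 3 → Fin 3 → ℤ) : Prop :=
  (∃ u : Fin 3 → ℤ, (∀ i, 0 ≤ u i) ∧ (∑ i : Fin 3, u i = (N : ℤ) - 1) ∧
    ∀ i, v i = u + Pi.single i 1) ∨
  (∃ u : Fin 3 → ℤ, (∀ i, 1 ≤ u i) ∧ (∑ i : Fin 3, u i = (N : ℤ) + 1) ∧
    ∀ i, v i = u - Pi.single i 1)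

lemma sum_abs_sub_single (l : Fin 3 → ℝ) (h0 : ∀ i, 0 ≤ l i) (h1 : ∑ i, l i = 1) (i : Fin 3) :
    ∑ j, |l j - ((Pi.single i 1 : Fin 3 → ℤ) j : ℝ)| = 2 * (1 - l i) := by
  have a := h0 0
  have b := h0 1
  have d := h0 2
  rw [Fin.sum_univ_three] at h1 ⊢
  fin_cases i <;> simp [abs_of_nonneg, *] <;>
    rw [abs_of_nonpos (by linarith)] <;> linarith

/-- A negative coordinate of `z` would give a coordinate of `l - z` of size at least `1`, hence
`L¹` norm at least `2` because the coordinates of `l - z` sum to zero. -/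
lemma eq_single_of_sum_abs_lt (l : Fin 3 → ℝ) (h0 : ∀ i, 0 ≤ l i) (h1 : ∑ i, l i = 1)
    (z : Fin 3 → ℤ) (hz : ∑ i, z i = 1) (h : ∑ j, |l j - (z j : ℝ)| < 2) :
    ∃ i, z = Pi.single i 1 := by
  have a := h0 0
  have b := h0 1
  have d := h0 2
  rw [Fin.sum_univ_three] at h1 h hz
  have hzr : (z 0 : ℝ) + z 1 + z 2 = 1 := by exact_mod_cast hz
  have p0 := abs_le.1 (le_refl |l 0 - (z 0 : ℝ)|)
  have p1 := abs_le.1 (le_refl |l 1 - (z 1 : ℝ)|)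
  have p2 := abs_le.1 (le_refl |l 2 - (z 2 : ℝ)|)
  have q0 : -1 < z 0 := by
    have : (-1 : ℝ) < z 0 := by linarith
    exact_mod_cast this
  have q1 : -1 < z 1 := by
    have : (-1 : ℝ) < z 1 := by linarith
    exact_mod_cast this
  have q2 : -1 < z 2 := by
    have : (-1 : ℝ) < z 2 := by linarith
    exact_mod_cast this
  have : (z 0 = 1 ∧ z 1 = 0 ∧ z 2 = 0) ∨ (z 0 = 0 ∧ z 1 = 1 ∧ z 2 = 0) ∨
      (z 0 = 0 ∧ z 1 = 0 ∧ z 2 = 1) := by omega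
  rcases this with ⟨e0, e1, e2⟩ | ⟨e0, e1, e2⟩ | ⟨e0, e1, e2⟩
  · exact ⟨0, by ext j; fin_cases j <;> simp [*]⟩
  · exact ⟨1, by ext j; fin_cases j <;> simp [*]⟩
  · exact ⟨2, by ext j; fin_cases j <;> simp [*]⟩

/-- `l` is a system of barycentric coordinates of `y` in the cell enumerated by `v`. -/
def InCell (N : ℕ) (v : Fin 3 → Fin 3 → ℤ) (l : Fin 3 → ℝ) (y : Fin 3 → ℝ) : Prop :=
  IsCell N v ∧ (∀ i, 0 ≤ l i) ∧ ∑ i, l i = 1 ∧ ∀ j, y j = ∑ i, l i * (v i j : ℝ)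

/-- The barycentric coordinates are the offsets of `y` from the base point `u` of the cell, up to
the sign that distinguishes upward from downward cells. -/
lemma InCell.offset {N : ℕ} {v : Fin 3 → Fin 3 → ℤ} {l y : Fin 3 → ℝ} (h : InCell N v l y) :
    ∃ u : Fin 3 → ℤ,
      ((∀ j, y j - u j = l j) ∧ (∑ i, u i = (N : ℤ) - 1) ∧ ∀ i, v i = u + Pi.single i 1) ∨
      ((∀ j, y j - u j = -l j) ∧ (∑ i, u i = (N : ℤ) + 1) ∧ ∀ i, v i = u - Pi.single i 1) := by
  obtain ⟨hc, -, h1, hy⟩ := h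
  rw [Fin.sum_univ_three] at h1
  rcases hc with ⟨u, -, hu, hv⟩ | ⟨u, -, hu, hv⟩
  · refine ⟨u, Or.inl ⟨fun j => ?_, hu, hv⟩⟩
    rw [hy, Fin.sum_univ_three, hv, hv, hv]
    fin_cases j <;> simp
    · linear_combination (u 0 : ℝ) * h1
    · linear_combination (u 1 : ℝ) * h1
    · linear_combination (u 2 : ℝ) * h1
  · refine ⟨u, Or.inr ⟨fun j => ?_, hu, hv⟩⟩
    rw [hy, Fin.sum_univ_three, hv, hv, hv]
    fin_cases j <;> simp
    · linear_combination (u 0 : ℝ) * h1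
    · linear_combination (u 1 : ℝ) * h1
    · linear_combination (u 2 : ℝ) * h1

lemma dist1_vertex {N : ℕ} {v : Fin 3 → Fin 3 → ℤ} {l y : Fin 3 → ℝ} (h : InCell N v l y)
    (i : Fin 3) : dist1 y (v i) = 2 * (1 - l i) := by
  rw [← sum_abs_sub_single l h.2.1 h.2.2.1 i, dist1]
  obtain ⟨u, ⟨hl, -, hv⟩ | ⟨hl, -, hv⟩⟩ := h.offset
  · refine Finset.sum_congr rfl fun j _ => ?_
    rw [hv, ← hl, Pi.add_apply]
    push_cast
    ring_nf
  · refine Finset.sum_congr rfl fun j _ => ?_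
    rw [hv, ← neg_neg (l j), ← hl, Pi.sub_apply, ← abs_neg]
    push_cast
    ring_nf

lemma eq_vertex_of_dist1_lt {N : ℕ} {v : Fin 3 → Fin 3 → ℤ} {l y : Fin 3 → ℝ}
    (h : InCell N v l y) (w : Fin 3 → ℤ) (hw : w ∈ VN N) (hd : dist1 y w < 2) :
    ∃ i, w = v i := by
  have hw2 := hw.2
  obtain ⟨u, ⟨hl, hu, hv⟩ | ⟨hl, hu, hv⟩⟩ := h.offset
  · obtain ⟨i, hi⟩ := eq_single_of_sum_abs_lt l h.2.1 h.2.2.1 (w - u)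
      (by simp [Finset.sum_sub_distrib, hu, hw2]) (by
        refine lt_of_eq_of_lt (Finset.sum_congr rfl fun j _ => ?_) hd
        rw [← hl, Pi.sub_apply]
        push_cast
        ring_nf)
    exact ⟨i, by rw [hv, ← hi]; abel⟩
  · obtain ⟨i, hi⟩ := eq_single_of_sum_abs_lt l h.2.1 h.2.2.1 (u - w)
      (by simp [Finset.sum_sub_distrib, hu, hw2]) (by
        refine lt_of_eq_of_lt (Finset.sum_congr rfl fun j _ => ?_) hd
        rw [← neg_neg (l j), ← hl, Pi.sub_apply, ← abs_neg]
        push_cast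
        ring_nf)
    exact ⟨i, by rw [hv, ← hi]; abel⟩

lemma IsCell.mem_VN {N : ℕ} {v : Fin 3 → Fin 3 → ℤ} (h : IsCell N v) (i : Fin 3) :
    v i ∈ VN N := by
  rcases h with ⟨u, h0, hu, hv⟩ | ⟨u, h0, hu, hv⟩
  · refine ⟨fun j => ?_, ?_⟩
    · have := h0 j
      rw [hv, Pi.add_apply, Pi.single_apply]
      split_ifs <;> omega
    · simp [hv, Finset.sum_add_distrib, hu]
  · refine ⟨fun j => ?_, ?_⟩
    · have := h0 j
      rw [hv, Pi.sub_apply, Pi.single_apply]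
      split_ifs <;> omega
    · simp [hv, Finset.sum_sub_distrib, hu]

lemma inCell_up {N : ℕ} {y : Fin 3 → ℝ} (hy : y ∈ NDelta2 N) (u : Fin 3 → ℤ)
    (h0 : ∀ i, 0 ≤ u i) (hu : ∑ i, u i = (N : ℤ) - 1) (hl : ∀ i, (u i : ℝ) ≤ y i) :
    ∃ v l, InCell N v l y := by
  have hs : ∑ i, (y i - u i) = 1 := by
    have : (∑ i, (u i : ℝ)) = N - 1 := by exact_mod_cast hu
    rw [Finset.sum_sub_distrib, hy.2, this]
    ring
  refine ⟨fun i => u + Pi.single i 1, fun i => y i - u i, Or.inl ⟨u, h0, hu, fun _ => rfl⟩,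
    fun i => sub_nonneg.2 (hl i), hs, fun j => ?_⟩
  rw [Fin.sum_univ_three] at hs ⊢
  fin_cases j <;> simp
  · linear_combination -(u 0 : ℝ) * hs
  · linear_combination -(u 1 : ℝ) * hs
  · linear_combination -(u 2 : ℝ) * hs

lemma inCell_down {N : ℕ} {y : Fin 3 → ℝ} (hy : y ∈ NDelta2 N) (u : Fin 3 → ℤ)
    (h0 : ∀ i, 1 ≤ u i) (hu : ∑ i, u i = (N : ℤ) + 1) (hl : ∀ i, y i ≤ (u i : ℝ)) :
    ∃ v l, InCell N v l y := by
  have hs : ∑ i, (u i - y i) = 1 := by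
    have : (∑ i, (u i : ℝ)) = N + 1 := by exact_mod_cast hu
    rw [Finset.sum_sub_distrib, hy.2, this]
    ring
  refine ⟨fun i => u - Pi.single i 1, fun i => u i - y i, Or.inr ⟨u, h0, hu, fun _ => rfl⟩,
    fun i => sub_nonneg.2 (hl i), hs, fun j => ?_⟩
  rw [Fin.sum_univ_three] at hs ⊢
  fin_cases j <;> simp
  · linear_combination -(u 0 : ℝ) * hs
  · linear_combination -(u 1 : ℝ) * hs
  · linear_combination -(u 2 : ℝ) * hs

/-- The sum of the fractional parts of `y` is `0`, `1` or `2`. Sum `1` gives an upward cell and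
sum `2` a downward one; for sum `0`, `y` is itself a vertex. -/
lemma exists_inCell {N : ℕ} (hN : 1 ≤ N) {y : Fin 3 → ℝ} (hy : y ∈ NDelta2 N) :
    ∃ v l, InCell N v l y := by
  have f0 : ∀ i, 0 ≤ ⌊y i⌋ := fun i => Int.floor_nonneg.2 (hy.1 i)
  have fl : ∀ i, (⌊y i⌋ : ℝ) ≤ y i := fun i => Int.floor_le _
  have fu : ∀ i, y i < ⌊y i⌋ + 1 := fun i => Int.lt_floor_add_one _
  have hs := hy.2
  rw [Fin.sum_univ_three] at hs
  have s1 : ⌊y 0⌋ + ⌊y 1⌋ + ⌊y 2⌋ ≤ N := by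
    have : (⌊y 0⌋ : ℝ) + ⌊y 1⌋ + ⌊y 2⌋ ≤ N := by linarith [fl 0, fl 1, fl 2]
    exact_mod_cast this
  have s2 : (N : ℤ) < ⌊y 0⌋ + ⌊y 1⌋ + ⌊y 2⌋ + 3 := by
    have : (N : ℝ) < (⌊y 0⌋ : ℝ) + ⌊y 1⌋ + ⌊y 2⌋ + 3 := by linarith [fu 0, fu 1, fu 2]
    exact_mod_cast this
  have cases3 : ⌊y 0⌋ + ⌊y 1⌋ + ⌊y 2⌋ = (N : ℤ) ∨ ⌊y 0⌋ + ⌊y 1⌋ + ⌊y 2⌋ = (N : ℤ) - 1 ∨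
      ⌊y 0⌋ + ⌊y 1⌋ + ⌊y 2⌋ + 3 = (N : ℤ) + 1 := by omega
  rcases cases3 with h | h | h
  -- A vertex belongs to the upward cell obtained by lowering one of its positive coordinates.
  · obtain ⟨k, hk⟩ : ∃ k, 1 ≤ ⌊y k⌋ := by
      by_contra! hcon
      have := hcon 0
      have := hcon 1
      have := hcon 2
      omega
    refine inCell_up hy (fun i => ⌊y i⌋ - (Pi.single k 1 : Fin 3 → ℤ) i) (fun i => ?_) ?_
      (fun i => ?_)
    · have := f0 i
      rw [Pi.single_apply]
      split_ifs with hik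
      · subst hik; omega
      · omega
    · rw [Finset.sum_sub_distrib, Fin.sum_univ_three, h]
      simp
    · have := fl i
      rw [Pi.single_apply]
      split_ifs <;> push_cast <;> linarith
  · exact inCell_up hy (fun i => ⌊y i⌋) f0 (by rw [Fin.sum_univ_three, h]) fl
  · refine inCell_down hy (fun i => ⌊y i⌋ + 1) (fun i => by have := f0 i; omega) ?_
      (fun i => by push_cast; exact (fu i).le)
    rw [Fin.sum_univ_three]
    omega

lemma exists_dist1_le {N : ℕ} (hN : 1 ≤ N) {y : Fin 3 → ℝ} (hy : y ∈ NDelta2 N) :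
    ∃ w ∈ VN N, dist1 y w ≤ 4 / 3 := by
  obtain ⟨v, l, h⟩ := exists_inCell hN hy
  obtain ⟨i, hi⟩ : ∃ i, 1 / 3 ≤ l i := by
    by_contra! hcon
    have hs := h.2.2.1
    rw [Fin.sum_univ_three] at hs
    linarith [hcon 0, hcon 1, hcon 2]
  exact ⟨v i, h.1.mem_VN i, by rw [dist1_vertex h]; linarith⟩

/-- If each `1/8`-neighborhood of `x ∈ NΔ₂` meets all three sets `C_1, C_2, C_3`, then `x`
lies in the interior of a trichromatic cell of the triangulation. -/
theorem point_in_trichromatic_cell (N : ℕ) (hN : 1 ≤ N)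
    (c : (Fin 3 → ℤ) → Fin 3) (hc : IsSpernerColoring N c)
    (x : Fin 3 → ℝ) (hx : x ∈ NDelta2 N)
    (hclose : ∀ i : Fin 3, ∃ xi ∈ coverSet N c i, ∑ j : Fin 3, |x j - xi j| ≤ 1 / 8) :
    ∃ v : Fin 3 → Fin 3 → ℤ, IsCell N v ∧
      Function.Injective (fun i : Fin 3 => c (v i)) ∧
      ∃ lam : Fin 3 → ℝ, (∀ i, 0 < lam i) ∧ (∑ i : Fin 3, lam i = 1) ∧
        ∀ j, x j = ∑ i : Fin 3, lam i * (v i j : ℝ) := by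
  obtain ⟨v, l, h⟩ := exists_inCell hN hx
  have key : ∀ i, ∃ k, c (v k) = i ∧ 0 < l k := by
    intro i
    obtain ⟨y, ⟨hy, w, hw, hmin, hcw⟩, hxy⟩ := hclose i
    obtain ⟨w', hw', hd'⟩ := exists_dist1_le hN hy
    have hxw : dist1 x w ≤ 1 / 8 + 4 / 3 := by
      calc dist1 x w ≤ ∑ j, (|x j - y j| + |y j - w j|) :=
            Finset.sum_le_sum fun j _ => abs_sub_le _ _ _
        _ = ∑ j, |x j - y j| + dist1 y w := Finset.sum_add_distrib
        _ ≤ 1 / 8 + 4 / 3 := add_le_add hxy ((hmin w' hw').trans hd')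
    obtain ⟨k, rfl⟩ := eq_vertex_of_dist1_lt h w hw (by linarith)
    rw [dist1_vertex h] at hxw
    exact ⟨k, hcw, by linarith⟩
  choose σ hσ hpos using key
  -- `σ` has the left inverse `c ∘ v` on a finite type, so it is a bijection.
  have hsurj : Function.Surjective σ :=
    Finite.surjective_of_injective (Function.LeftInverse.injective (g := fun k => c (v k)) hσ)
  refine ⟨v, h.1, fun a b hab => ?_, l, fun i => ?_, h.2.2.1, h.2.2.2⟩
  · obtain ⟨i, rfl⟩ := hsurj a
    obtain ⟨j, rfl⟩ := hsurj b
    have hij : c (v (σ i)) = c (v (σ j)) := hab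
    rw [hσ, hσ] at hij
    rw [hij]
  · obtain ⟨j, rfl⟩ := hsurj i
    exact hpos j
end

section
/- Let Δ₂ := conv{e¹, e², e³} ⊂ ℝ³ be the standard 2-simplex. If x ∈ ℝ³ satisfies ‖x − y‖₁ ≤ 1/8 for some y ∈ Δ₂, then for every v ∈ ℤ³ with v₁+v₂+v₃ = 1 one has min_{i ∈ {1,2,3}} ‖x − e^i‖₁ ≤ ‖x − v‖₁; in other words, among the lattice points of the plane {z ∈ ℤ³ : z₁+z₂+z₃ = 1}, a closest point to x (in L1 distance) is one of the three vertices e¹, e², e³ of Δ₂. -/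
/-!
Compare `x` with the nearby simplex point `y`. The largest coordinate of `y` is at least `1/3`, and
`‖y - eⁱ‖₁ = 2 (1 - yᵢ)`, so some vertex is within `4/3` of `y` (`exists_vertex_dist_le`).
A lattice point `v` of the plane that is not a vertex has a coordinate `≤ -1`; there `y - v` is at
least `1`, and since the coordinates of `y - v` sum to `0`, the remaining ones contribute at least
`1` more, so `‖y - v‖₁ ≥ 2` (`two_le_dist`). Replacing `y` by `x` changes each distance by at most
`1/8`, and `4/3 + 1/8 ≤ 2 - 1/8`.
-/

lemma exists_vertex_dist_le (y : Fin 3 → ℝ) (hy : y ∈ stdSimplex ℝ (Fin 3)) :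
    ∃ i : Fin 3, ∑ j : Fin 3, |y j - (Pi.single i (1 : ℝ) : Fin 3 → ℝ) j| ≤ 4 / 3 := by
  obtain ⟨h0, h1⟩ := hy
  have hi : ∃ i, 1 / 3 ≤ y i := by
    by_contra! hc
    have := hc 0
    have := hc 1
    have := hc 2
    rw [Fin.sum_univ_three] at h1
    linarith
  obtain ⟨i, hi⟩ := hi
  refine ⟨i, ?_⟩
  have a0 := h0 0
  have a1 := h0 1
  have a2 := h0 2
  rw [Fin.sum_univ_three] at h1 ⊢
  fin_cases i <;> simp [abs_of_nonneg, a0, a1, a2] at hi ⊢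
  · rw [abs_of_nonpos (show y 0 - 1 ≤ 0 by linarith)]
    linarith
  · rw [abs_of_nonpos (show y 1 - 1 ≤ 0 by linarith)]
    linarith
  · rw [abs_of_nonpos (show y 2 - 1 ≤ 0 by linarith)]
    linarith

lemma two_le_dist (y : Fin 3 → ℝ) (hy : y ∈ stdSimplex ℝ (Fin 3)) (v : Fin 3 → ℤ)
    (hv : ∑ i : Fin 3, v i = 1) (k : Fin 3) (hk : v k ≤ -1) :
    2 ≤ ∑ j : Fin 3, |y j - (v j : ℝ)| := by
  obtain ⟨h0, h1⟩ := hy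
  have hk' : (v k : ℝ) ≤ -1 := by exact_mod_cast hk
  have hv' : ∑ i : Fin 3, (v i : ℝ) = 1 := by exact_mod_cast hv
  have hsum : ∑ j : Fin 3, (y j - (v j : ℝ)) = 0 := by
    rw [Finset.sum_sub_distrib, h1, hv', sub_self]
  have hyk := h0 k
  rw [← Finset.add_sum_erase _ _ (Finset.mem_univ k)] at hsum ⊢
  have habs := Finset.abs_sum_le_sum_abs (fun j => y j - (v j : ℝ)) (Finset.univ.erase k)
  have hneg := neg_le_abs (∑ j ∈ Finset.univ.erase k, (y j - (v j : ℝ)))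
  have hpos := le_abs_self (y k - (v k : ℝ))
  linarith

lemma eq_single_of_nonneg (v : Fin 3 → ℤ) (hv : ∑ i : Fin 3, v i = 1) (h0 : ∀ k, 0 ≤ v k) :
    ∃ i : Fin 3, v = Pi.single i 1 := by
  have a0 := h0 0
  have a1 := h0 1
  have a2 := h0 2
  rw [Fin.sum_univ_three] at hv
  have hcases : v 0 = 1 ∨ v 1 = 1 ∨ v 2 = 1 := by omega
  rcases hcases with h | h | h
  · refine ⟨0, ?_⟩
    ext j
    fin_cases j <;> simp <;> omega
  · refine ⟨1, ?_⟩
    ext j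
    fin_cases j <;> simp <;> omega
  · refine ⟨2, ?_⟩
    ext j
    fin_cases j <;> simp <;> omega

/-- If `x ∈ ℝ³` is within `L¹` distance `1/8` of the standard 2-simplex
`Δ₂ = conv {e¹, e², e³}`, then among the lattice points of the plane
`{z ∈ ℤ³ : z₁+z₂+z₃ = 1}`, a closest point to `x` (in `L¹` distance) is one of the three
vertices `e¹, e², e³`. -/
theorem closest_vertex (x : Fin 3 → ℝ)
    (h : ∃ y ∈ convexHull ℝ {z : Fin 3 → ℝ | ∃ i : Fin 3, z = Pi.single i (1 : ℝ)},
      ∑ j : Fin 3, |x j - y j| ≤ 1 / 8) :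
    ∀ v : Fin 3 → ℤ, (∑ i : Fin 3, v i = 1) →
      ∃ i : Fin 3, ∑ j : Fin 3, |x j - (Pi.single i (1 : ℝ) : Fin 3 → ℝ) j| ≤
        ∑ j : Fin 3, |x j - (v j : ℝ)| := by
  obtain ⟨y, hy, hxy⟩ := h
  have hy' : y ∈ stdSimplex ℝ (Fin 3) := by
    refine convexHull_min ?_ (convex_stdSimplex ℝ (Fin 3)) hy
    rintro z ⟨i, rfl⟩
    exact single_mem_stdSimplex ℝ i
  intro v hv
  by_cases h0 : ∀ k, 0 ≤ v k
  · obtain ⟨i, rfl⟩ := eq_single_of_nonneg v hv h0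
    refine ⟨i, le_of_eq (Finset.sum_congr rfl fun j _ => ?_)⟩
    by_cases hj : j = i
    · subst hj
      simp
    · simp [hj]
  · push Not at h0
    obtain ⟨k, hk⟩ := h0
    obtain ⟨i, hi⟩ := exists_vertex_dist_le y hy'
    have hfar := two_le_dist y hy' v hv k (by omega)
    refine ⟨i, ?_⟩
    have t1 : ∑ j : Fin 3, |x j - (Pi.single i (1 : ℝ) : Fin 3 → ℝ) j| ≤
        ∑ j : Fin 3, |x j - y j| + ∑ j : Fin 3, |y j - (Pi.single i (1 : ℝ) : Fin 3 → ℝ) j| := by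
      rw [← Finset.sum_add_distrib]
      exact Finset.sum_le_sum fun j _ => abs_sub_le _ _ _
    have t2 : ∑ j : Fin 3, |y j - (v j : ℝ)| ≤
        ∑ j : Fin 3, |x j - y j| + ∑ j : Fin 3, |x j - (v j : ℝ)| := by
      rw [← Finset.sum_add_distrib]
      refine Finset.sum_le_sum fun j _ => ?_
      rw [abs_sub_comm (x j) (y j)]
      exact abs_sub_le _ _ _
    linarith
end

section
/- (Sperner's lemma for the cube.) Let n, N ≥ 1 and let c : {0,1,…,N}^n → {0,1,…,n} be a Sperner coloring of the vertices of Kuhn's triangulation of [0,N]^n: c(v) ≠ i whenever v_i = 0 (for each i ∈ {1,…,n}), and c(v) ≠ 0 whenever v_i = N for some i ∈ {1,…,n}. Then there exists a panchromatic cell: there exist x ∈ {0,…,N−1}^n and a permutation σ of {1,…,n} such that the cell vertices w⁰ := x, w^i := w^{i−1} + e^{σ(i)} (i = 1,…,n) satisfy {c(w⁰), c(w¹), …, c(w^n)} = {0,1,…,n}. -/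
/-!
Sperner's lemma for the cube, by parity and induction on the dimension `m` of the faces
`{v | v i = 0 for all i ≥ m}`, `m = 0, …, n`: the number of `m`-cells of such a face carrying exactly
the colors `0, …, m` is odd (`SpernerCube.card_full`).

For the step from `m` to `m + 1`, count the *doors*: pairs of an `(m + 1)`-cell and one of its facets
which carries exactly the colors `0, …, m`. A cell has one door if it carries all of `0, …, m + 1`,
and none or two otherwise (`card_facets`), so the number of doors has the parity of the number of
fully colored `(m + 1)`-cells. On the other hand, a facet inside the face belongs to two cells,
exchanged by the fixed-point-free involution `pivot`, so such doors cancel modulo 2. A door in the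
boundary cannot lie in `v i = N`, where color `0` is missing, nor in `v i = 0` with `i < m`, where
color `i + 1` is missing. The remaining boundary doors, in `v m = 0`, are precisely the fully
colored `m`-cells (`card_doors_eq_full`).

A cell is stored as a corner and the *inverse* of the permutation in `cellVertex`, which gives its
vertices a closed form. All dimensions share this representation in `Fin n`, so a fully colored
`m`-cell and the `(m + 1)`-cell having it as its last facet are literally the same pair.
-/

/-- The vertices `w⁰ = x`, `w^{i+1} = w^i + e^{σ(i+1)}` of the cell of Kuhn's triangulation
determined by the corner `x` and the permutation `σ` (indices 0-based). -/
def cellVertex {n : ℕ} (x : Fin n → ℕ) (σ : Equiv.Perm (Fin n)) : ℕ → Fin n → ℕ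
  | 0 => x
  | (i + 1) => fun j =>
      cellVertex x σ i j + if h : i < n then (if σ ⟨i, h⟩ = j then 1 else 0) else 0

namespace SpernerCube

/-! ### Cells, fully colored cells and doors -/

open Finset

variable {n : ℕ}

/-- The `i`-th vertex of the Kuhn cell with corner `x`, where `τ j` is the (0-based) time at which
the coordinate `j` is increased. Thus `τ` is the inverse of the permutation `σ` used in
`cellVertex`. -/
def vert (x : Fin n → ℕ) (τ : Equiv.Perm (Fin n)) (i : ℕ) : Fin n → ℕ :=
  fun j => x j + if (τ j : ℕ) < i then 1 else 0

lemma cellVertex_eq_vert (x : Fin n → ℕ) (τ : Equiv.Perm (Fin n)) (i : ℕ) :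
    cellVertex x τ.symm i = vert x τ i := by
  induction i with
  | zero => funext j; simp [cellVertex, vert]
  | succ i ih =>
    funext j
    have hj := (τ j).isLt
    simp only [cellVertex, ih, vert, Equiv.symm_apply_eq, Fin.ext_iff]
    split_ifs <;> omega

/-- The cells of Kuhn's triangulation of the face `{v | v i = 0 for all i ≥ m}` of `[0,N]^n`. Such an
`m`-cell is stored as an `n`-cell `(x, τ)` whose first `m + 1` vertices are the vertices in
question; the steps of index `≥ m` are normalised by `τ i = i`. -/
def cells (n N m : ℕ) : Finset ((Fin n → ℕ) × Equiv.Perm (Fin n)) :=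
  ((Fintype.piFinset fun _ => range N) ×ˢ univ).filter
    fun p => ∀ i : Fin n, m ≤ (i : ℕ) → p.1 i = 0 ∧ p.2 i = i

/-- The `m`-cells whose vertices carry exactly the colors `0, …, m`. -/
def full (N : ℕ) (c : (Fin n → ℕ) → ℕ) (m : ℕ) : Finset ((Fin n → ℕ) × Equiv.Perm (Fin n)) :=
  (cells n N m).filter
    fun p => (range (m + 1)).image (fun i => c (vert p.1 p.2 i)) = range (m + 1)

/-- The pairs of an `(m + 1)`-cell and an index `k` such that the facet opposite to the `k`-th
vertex carries exactly the colors `0, …, m`. -/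
def doors (N : ℕ) (c : (Fin n → ℕ) → ℕ) (m : ℕ) :
    Finset (((Fin n → ℕ) × Equiv.Perm (Fin n)) × ℕ) :=
  (cells n N (m + 1) ×ˢ range (m + 2)).filter
    fun q => ((range (m + 2)).erase q.2).image (fun i => c (vert q.1.1 q.1.2 i)) = range (m + 1)

lemma mem_cells {N m : ℕ} {p : (Fin n → ℕ) × Equiv.Perm (Fin n)} :
    p ∈ cells n N m ↔ (∀ j, p.1 j < N) ∧ ∀ i : Fin n, m ≤ (i : ℕ) → p.1 i = 0 ∧ p.2 i = i := by
  simp [cells]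

/-! ### Counting the doors of one cell -/

/-- With `f` the colors of the vertices of a single `(m + 1)`-cell: the number of its facets colored `0, …, m` is
odd exactly when the cell carries all colors `0, …, m + 1`. -/
lemma card_facets (m : ℕ) (f : ℕ → ℕ) (hf : ∀ i < m + 2, f i < m + 2) :
    ((((range (m + 2)).filter
      fun k => ((range (m + 2)).erase k).image f = range (m + 1)).card : ℕ) : ZMod 2) =
      if (range (m + 2)).image f = range (m + 2) then 1 else 0 := by
  split_ifs with h
  · have hinj : Set.InjOn f (range (m + 2)) := by
      rw [← Finset.card_image_iff, h]
    obtain ⟨k₀, hk₀, hfk₀⟩ : ∃ k ∈ range (m + 2), f k = m + 1 := by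
      rw [← Finset.mem_image, h]; simp
    have : (range (m + 2)).filter
        (fun k => ((range (m + 2)).erase k).image f = range (m + 1)) = {k₀} := by
      ext k
      simp only [mem_filter, mem_singleton]
      constructor
      · rintro ⟨hk, hk'⟩
        by_contra hne
        have : f k₀ ∈ ((range (m + 2)).erase k).image f :=
          mem_image_of_mem _ (mem_erase.2 ⟨fun e => hne e.symm, hk₀⟩)
        rw [hk', hfk₀] at this
        simp at this
      · rintro rfl
        refine ⟨hk₀, ?_⟩
        ext y
        simp only [mem_image, mem_erase, mem_range]
        constructor
        · rintro ⟨i, ⟨hi, hi'⟩, rfl⟩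
          have h1 := hf i hi'
          have : f i ≠ m + 1 := fun e => hi (hinj (by simpa using hi') hk₀ (e.trans hfk₀.symm))
          omega
        · intro hy
          have : y ∈ (range (m + 2)).image f := by rw [h]; simp; omega
          obtain ⟨i, hi, rfl⟩ := mem_image.1 this
          exact ⟨i, ⟨by rintro rfl; omega, by simpa using hi⟩, rfl⟩
    rw [this, card_singleton, Nat.cast_one]
  · by_cases hne : ((range (m + 2)).filter
        fun k => ((range (m + 2)).erase k).image f = range (m + 1)) = ∅
    · simp [hne]
    obtain ⟨k₀, hk₀⟩ := Finset.nonempty_iff_ne_empty.2 hne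
    obtain ⟨hk₀, him⟩ := mem_filter.1 hk₀
    have hinj : Set.InjOn f ((range (m + 2)).erase k₀) := by
      rw [← Finset.card_image_iff, him, card_erase_of_mem hk₀]; simp
    -- the remaining vertex repeats one of the colors `0, …, m`, since not all colors occur
    have hlt : f k₀ < m + 1 := by
      by_contra hge
      have h1 := hf k₀ (by simpa using hk₀)
      apply h
      have hins : (range (m + 2)).image f = insert (f k₀) (range (m + 1)) := by
        rw [← him, ← image_insert, insert_erase hk₀]
      rw [hins, show f k₀ = m + 1 by omega, ← Finset.range_add_one]
    have : f k₀ ∈ ((range (m + 2)).erase k₀).image f := by rw [him]; simpa using hlt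
    obtain ⟨k₁, hk₁, hfk⟩ := mem_image.1 this
    have hk₁' := mem_erase.1 hk₁
    have : (range (m + 2)).filter
        (fun k => ((range (m + 2)).erase k).image f = range (m + 1)) = {k₀, k₁} := by
      ext k
      simp only [mem_filter, mem_insert, mem_singleton]
      constructor
      · rintro ⟨hk, hk'⟩
        by_contra hcon
        push Not at hcon
        have hinj' : Set.InjOn f ((range (m + 2)).erase k) := by
          rw [← Finset.card_image_iff, hk', card_erase_of_mem hk]; simp
        exact hk₁'.1 (hinj' (mem_erase.2 ⟨Ne.symm hcon.2, hk₁'.2⟩)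
          (mem_erase.2 ⟨Ne.symm hcon.1, hk₀⟩) hfk)
      · rintro (rfl | rfl)
        · exact ⟨hk₀, him⟩
        · refine ⟨hk₁'.2, ?_⟩
          rw [← him]
          ext y
          simp only [mem_image, mem_erase]
          constructor
          · rintro ⟨i, ⟨hi, hi'⟩, rfl⟩
            by_cases e : i = k₀
            · exact ⟨k, hk₁', by rw [hfk, e]⟩
            · exact ⟨i, ⟨e, hi'⟩, rfl⟩
          · rintro ⟨i, ⟨hi, hi'⟩, rfl⟩
            by_cases e : i = k
            · exact ⟨k₀, ⟨fun e => hk₁'.1 e.symm, hk₀⟩, by rw [← hfk, e]⟩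
            · exact ⟨i, ⟨e, hi'⟩, rfl⟩
    rw [this, card_pair (Ne.symm hk₁'.1)]
    rfl

/-! ### The involution on doors -/

/-- The other `(m + 1)`-cell containing the facet of `q.1` opposite to its vertex `q.2`, paired with
the index of the opposite vertex there. Pivoting at an inner vertex swaps two consecutive steps;
pivoting at the first (last) vertex moves the first (last) of the steps `0, …, l` to the other
end, with `l = m`. -/
def pivot (l : Fin n) (q : ((Fin n → ℕ) × Equiv.Perm (Fin n)) × ℕ) :
    ((Fin n → ℕ) × Equiv.Perm (Fin n)) × ℕ :=
  if q.2 = 0 then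
    ((fun j => q.1.1 j + if (q.1.2 j : ℕ) = 0 then 1 else 0, q.1.2.trans l.cycleRange.symm), l + 1)
  else if q.2 = l + 1 then
    ((fun j => q.1.1 j - if (q.1.2 j : ℕ) = l then 1 else 0, q.1.2.trans l.cycleRange), 0)
  else if h : q.2 < n then
    ((q.1.1, q.1.2.trans (Equiv.swap ⟨q.2 - 1, by omega⟩ ⟨q.2, h⟩)), q.2)
  else q

lemma val_cycleRange (l t : Fin n) :
    (l.cycleRange t : ℕ) = if (t : ℕ) < l then (t : ℕ) + 1 else if (t : ℕ) = l then 0 else t := by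
  have : NeZero n := ⟨by have := l.isLt; omega⟩
  split_ifs with h1 h2
  · exact Fin.coe_cycleRange_of_lt h1
  · rw [Fin.cycleRange_of_eq (Fin.ext h2)]; simp
  · rw [Fin.cycleRange_of_gt (Fin.lt_def.2 (by omega))]

lemma val_cycleRange_symm (l t : Fin n) :
    (l.cycleRange.symm t : ℕ) =
      if (t : ℕ) = 0 then (l : ℕ) else if (t : ℕ) ≤ l then (t : ℕ) - 1 else t := by
  obtain ⟨s, rfl⟩ := l.cycleRange.surjective t
  rw [Equiv.symm_apply_apply, val_cycleRange]
  grind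

lemma val_swap (k : ℕ) (h : k < n) (t : Fin n) :
    (Equiv.swap (⟨k - 1, by omega⟩ : Fin n) ⟨k, h⟩ t : ℕ) =
      if (t : ℕ) = k - 1 then k else if (t : ℕ) = k then k - 1 else t := by
  rw [Equiv.swap_apply_def]
  simp only [Fin.ext_iff]
  split_ifs <;> rfl

section Coloring

variable {N : ℕ} {c : (Fin n → ℕ) → ℕ}

lemma vert_le {m : ℕ} {p : (Fin n → ℕ) × Equiv.Perm (Fin n)} (hp : p ∈ cells n N m) (i : ℕ)
    (j : Fin n) : vert p.1 p.2 i j ≤ N := by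
  have := (mem_cells.1 hp).1 j
  simp only [vert]
  split_ifs <;> omega

/-- With `m = l`, the doors that do not lie in the face `{v | v m = 0}`; the excluded ones are the last
facets of cells whose first `m + 1` vertices form a fully colored `m`-cell. -/
def innerDoors (N : ℕ) (c : (Fin n → ℕ) → ℕ) (l : Fin n) :
    Finset (((Fin n → ℕ) × Equiv.Perm (Fin n)) × ℕ) :=
  (doors N c l).filter fun q => ¬ (q.2 = (l : ℕ) + 1 ∧ q.1 ∈ full N c l)

lemma mem_doors {m : ℕ} {q : ((Fin n → ℕ) × Equiv.Perm (Fin n)) × ℕ} :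
    q ∈ doors N c m ↔ (q.1 ∈ cells n N (m + 1) ∧ q.2 < m + 2) ∧
      ((range (m + 2)).erase q.2).image (fun i => c (vert q.1.1 q.1.2 i)) = range (m + 1) := by
  simp [doors]

/-- A door in an outer facet `v j = 0` can only lie in the facet `v m = 0`, and there it is a
fully colored `m`-cell. -/
lemma mem_full_of_door (l : Fin n)
    (hc1 : ∀ v : Fin n → ℕ, (∀ j, v j ≤ N) → ∀ i : Fin n, v i = 0 → c v ≠ (i : ℕ) + 1)
    {q : ((Fin n → ℕ) × Equiv.Perm (Fin n)) × ℕ} (hq : q ∈ doors N c l) (hk : q.2 = (l : ℕ) + 1)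
    {j : Fin n} (hj : (q.1.2 j : ℕ) = l) (hx : q.1.1 j = 0) : q.1 ∈ full N c l := by
  obtain ⟨⟨x, τ⟩, k⟩ := q
  obtain ⟨⟨hp, -⟩, him⟩ := mem_doors.1 hq
  simp only at hk hj hx him hp ⊢
  subst hk
  have hcell := mem_cells.1 hp
  have her : (range ((l : ℕ) + 2)).erase ((l : ℕ) + 1) = range ((l : ℕ) + 1) := by
    ext i; simp; omega
  rw [her] at him
  have hjl : j = l := by
    by_contra hne
    have hne' : (j : ℕ) ≠ l := fun e => hne (Fin.ext e)
    have hjlt : (j : ℕ) < l := by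
      by_contra hge
      have := (hcell.2 j (by omega)).2
      simp only at this
      rw [this] at hj
      omega
    have : (j : ℕ) + 1 ∈ (range ((l : ℕ) + 1)).image (fun i => c (vert x τ i)) := by
      rw [him]; simp; omega
    obtain ⟨i, hi, hci⟩ := mem_image.1 this
    refine hc1 _ (vert_le hp i) j ?_ hci
    have : i < (l : ℕ) + 1 := by simpa using hi
    simp only [vert, hx, hj]
    rw [if_neg (by omega)]
  subst hjl
  refine mem_filter.2 ⟨mem_cells.2 ⟨hcell.1, fun i hi => ?_⟩, him⟩
  rcases Nat.eq_or_lt_of_le hi with h | h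
  · obtain rfl : j = i := Fin.ext h
    exact ⟨hx, Fin.ext hj⟩
  · exact hcell.2 i h

lemma mem_innerDoors (l : Fin n)
    (hc1 : ∀ v : Fin n → ℕ, (∀ j, v j ≤ N) → ∀ i : Fin n, v i = 0 → c v ≠ (i : ℕ) + 1)
    {q : ((Fin n → ℕ) × Equiv.Perm (Fin n)) × ℕ} :
    q ∈ innerDoors N c l ↔ q ∈ doors N c l ∧
      (q.2 = (l : ℕ) + 1 → ∀ j, (q.1.2 j : ℕ) = l → q.1.1 j ≠ 0) := by
  simp only [innerDoors, mem_filter, not_and]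
  refine and_congr_right fun hq => ⟨fun h hk j hj hx => ?_, fun h hk hful => ?_⟩
  · exact h hk (mem_full_of_door l hc1 hq hk hj hx)
  · have := (mem_cells.1 (mem_filter.1 hful).1).2 l le_rfl
    exact h hk l (by rw [this.2]) this.1

lemma pivot_mem (l : Fin n)
    (hc1 : ∀ v : Fin n → ℕ, (∀ j, v j ≤ N) → ∀ i : Fin n, v i = 0 → c v ≠ (i : ℕ) + 1)
    (hc0 : ∀ v : Fin n → ℕ, (∀ j, v j ≤ N) → (∃ i, v i = N) → c v ≠ 0)
    {q : ((Fin n → ℕ) × Equiv.Perm (Fin n)) × ℕ} (hq : q ∈ innerDoors N c l) :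
    pivot l q ∈ innerDoors N c l := by
  rw [mem_innerDoors l hc1] at hq ⊢
  obtain ⟨hq, hq2⟩ := hq
  obtain ⟨⟨x, τ⟩, k⟩ := q
  obtain ⟨⟨hp, hk⟩, him⟩ := mem_doors.1 hq
  have hcell := mem_cells.1 hp
  simp only at hp hk him hcell hq2
  have hl := l.isLt
  unfold pivot
  simp only
  split_ifs with h0 h1 h2
  · subst h0
    refine ⟨mem_doors.2 ⟨⟨mem_cells.2 ⟨fun j => ?_, fun i hi => ⟨?_, ?_⟩⟩, ?_⟩, ?_⟩,
      fun _ j hj => ?_⟩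
    · have hxj := hcell.1 j
      simp only
      split_ifs with hτ
      · -- otherwise the facet lies in `v j = N`, where the color `0` is missing
        by_contra hge
        have : 0 ∈ ((range ((l : ℕ) + 2)).erase 0).image (fun i => c (vert x τ i)) := by
          rw [him]; simp
        obtain ⟨i, hi, hci⟩ := mem_image.1 this
        refine hc0 _ (vert_le hp i) ⟨j, ?_⟩ hci
        have : i ≠ 0 := (mem_erase.1 hi).1
        simp only [vert, hτ]
        rw [if_pos (by omega)]
        omega
      · omega
    · have := hcell.2 i hi
      simp only [this.1, this.2]
      rw [if_neg (by omega)]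
    · have := hcell.2 i hi
      apply Fin.ext
      simp only [Equiv.trans_apply, this.2, val_cycleRange_symm]
      split_ifs <;> omega
    · simp
    · rw [← him]
      have key : ∀ i < (l : ℕ) + 1,
          vert (fun j => x j + if (τ j : ℕ) = 0 then 1 else 0) (τ.trans l.cycleRange.symm) i =
            vert x τ (i + 1) := by
        intro i hi
        funext j
        simp only [vert, Equiv.trans_apply, val_cycleRange_symm]
        split_ifs <;> omega
      ext y
      simp only [mem_image, mem_erase, mem_range]
      constructor
      · rintro ⟨i, ⟨hi, hi'⟩, rfl⟩
        exact ⟨i + 1, ⟨by omega, by omega⟩, by rw [key i (by omega)]⟩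
      · rintro ⟨i, ⟨hi, hi'⟩, rfl⟩
        obtain ⟨i, rfl⟩ := Nat.exists_eq_succ_of_ne_zero hi
        exact ⟨i, ⟨by omega, by omega⟩, by rw [key i (by omega)]⟩
    · simp only [Equiv.trans_apply, val_cycleRange_symm] at hj ⊢
      split_ifs at hj ⊢ <;> omega
  · subst h1
    refine ⟨mem_doors.2 ⟨⟨mem_cells.2 ⟨fun j => ?_, fun i hi => ⟨?_, ?_⟩⟩, ?_⟩, ?_⟩,
      fun h => by simp at h⟩
    · have := hcell.1 j
      simp only
      omega
    · have := hcell.2 i hi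
      simp only [this.1, Nat.zero_sub]
    · have := hcell.2 i hi
      apply Fin.ext
      simp only [Equiv.trans_apply, this.2, val_cycleRange]
      split_ifs <;> omega
    · simp
    · rw [← him]
      have key : ∀ i < (l : ℕ) + 1,
          vert (fun j => x j - if (τ j : ℕ) = l then 1 else 0) (τ.trans l.cycleRange) (i + 1) =
            vert x τ i := by
        intro i hi
        funext j
        have := hq2 rfl j
        simp only [vert, Equiv.trans_apply, val_cycleRange]
        split_ifs <;> omega
      ext y
      simp only [mem_image, mem_erase, mem_range]
      constructor
      · rintro ⟨i, ⟨hi, hi'⟩, rfl⟩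
        obtain ⟨i, rfl⟩ := Nat.exists_eq_succ_of_ne_zero hi
        exact ⟨i, ⟨by omega, by omega⟩, by rw [← key i (by omega)]⟩
      · rintro ⟨i, ⟨hi, hi'⟩, rfl⟩
        exact ⟨i + 1, ⟨by omega, by omega⟩, by rw [key i (by omega)]⟩
  · refine ⟨mem_doors.2 ⟨⟨mem_cells.2 ⟨hcell.1, fun i hi => ⟨(hcell.2 i hi).1, ?_⟩⟩, hk⟩, ?_⟩,
      fun h => absurd h h1⟩
    · have := hcell.2 i hi
      apply Fin.ext
      simp only [Equiv.trans_apply, this.2, val_swap]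
      split_ifs <;> omega
    · rw [← him]
      refine Finset.image_congr fun i hi => ?_
      have hi : i ≠ k := (mem_erase.1 hi).1
      simp only
      congr 1
      funext j
      simp only [vert, Equiv.trans_apply, val_swap]
      split_ifs <;> omega
  · omega

lemma pivot_ne (l : Fin n) {q : ((Fin n → ℕ) × Equiv.Perm (Fin n)) × ℕ}
    (hq : q ∈ doors N c l) : pivot l q ≠ q := by
  obtain ⟨⟨x, τ⟩, k⟩ := q
  have hk := (mem_doors.1 hq).1.2
  have hl := l.isLt
  simp only at hk
  unfold pivot
  simp only
  split_ifs with h0 h1 h2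
  · intro h
    have := congrArg Prod.snd h
    simp only at this
    omega
  · intro h
    have := congrArg Prod.snd h
    simp only at this
    omega
  · intro h
    have := congrArg (fun q => (q.1.2 (τ.symm ⟨k, h2⟩) : ℕ)) h
    simp only [Equiv.trans_apply, Equiv.apply_symm_apply, val_swap] at this
    split_ifs at this <;> omega
  · omega

lemma pivot_pivot (l : Fin n)
    (hc1 : ∀ v : Fin n → ℕ, (∀ j, v j ≤ N) → ∀ i : Fin n, v i = 0 → c v ≠ (i : ℕ) + 1)
    {q : ((Fin n → ℕ) × Equiv.Perm (Fin n)) × ℕ} (hq : q ∈ innerDoors N c l) :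
    pivot l (pivot l q) = q := by
  rw [mem_innerDoors l hc1] at hq
  obtain ⟨hq, hq2⟩ := hq
  obtain ⟨⟨x, τ⟩, k⟩ := q
  have hk := (mem_doors.1 hq).1.2
  have hl := l.isLt
  simp only at hk hq2
  by_cases h0 : k = 0
  · subst h0
    simp only [pivot, if_true, Nat.add_eq_zero_iff, one_ne_zero, and_false, if_false,
      Prod.mk.injEq, and_true]
    constructor
    · funext j
      simp only [Equiv.trans_apply, val_cycleRange_symm]
      split_ifs <;> omega
    · ext j
      simp
  by_cases h1 : k = l + 1
  · subst h1
    simp only [pivot, if_true, Nat.add_eq_zero_iff, one_ne_zero, and_false, if_false,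
      Prod.mk.injEq, and_true]
    constructor
    · funext j
      have := hq2 rfl j
      simp only [Equiv.trans_apply, val_cycleRange]
      grind
    · ext j
      simp
  have h2 : k < n := by omega
  simp only [pivot, h0, h1, h2, if_false, dif_pos, Prod.mk.injEq, and_true, true_and]
  ext j
  simp

/-! ### The parity argument -/

lemma card_doors_eq_full (l : Fin n)
    (hc1 : ∀ v : Fin n → ℕ, (∀ j, v j ≤ N) → ∀ i : Fin n, v i = 0 → c v ≠ (i : ℕ) + 1)
    (hc0 : ∀ v : Fin n → ℕ, (∀ j, v j ≤ N) → (∃ i, v i = N) → c v ≠ 0) :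
    ((doors N c l).card : ZMod 2) = (full N c l).card := by
  have hinner : ((innerDoors N c l).card : ZMod 2) = 0 := by
    rw [Finset.card_eq_sum_ones, Nat.cast_sum]
    refine Finset.sum_involution (fun q _ => pivot l q) (fun _ _ => by decide)
      (fun q hq _ => pivot_ne l (mem_filter.1 hq).1) (fun q hq => pivot_mem l hc1 hc0 hq)
      (fun q hq => pivot_pivot l hc1 hq)
  have houter : (doors N c l).filter (fun q => q.2 = (l : ℕ) + 1 ∧ q.1 ∈ full N c l) =
      (full N c l).image (fun p => (p, (l : ℕ) + 1)) := by
    ext ⟨p, k⟩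
    simp only [mem_filter, mem_image, Prod.mk.injEq]
    constructor
    · rintro ⟨-, rfl, hp⟩
      exact ⟨p, hp, rfl, rfl⟩
    · rintro ⟨p, hp, rfl, rfl⟩
      refine ⟨mem_doors.2 ⟨⟨?_, by simp⟩, ?_⟩, rfl, hp⟩
      · have := mem_cells.1 (mem_filter.1 hp).1
        exact mem_cells.2 ⟨this.1, fun i hi => this.2 i (by omega)⟩
      · rw [show (range ((l : ℕ) + 2)).erase ((l : ℕ) + 1) = range ((l : ℕ) + 1) by
          ext i; simp; omega]
        exact (mem_filter.1 hp).2
  have hsplit := Finset.card_filter_add_card_filter_not (s := doors N c l)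
    (fun q => q.2 = (l : ℕ) + 1 ∧ q.1 ∈ full N c l)
  rw [houter, Finset.card_image_of_injective _ (fun a b h => (Prod.mk.inj h).1)] at hsplit
  rw [← hsplit, Nat.cast_add]
  change _ + ((innerDoors N c l).card : ZMod 2) = _
  rw [hinner, add_zero]

lemma card_doors_eq_full_succ {m : ℕ} (hcn : ∀ v, c v ≤ n)
    (hc1 : ∀ v : Fin n → ℕ, (∀ j, v j ≤ N) → ∀ i : Fin n, v i = 0 → c v ≠ (i : ℕ) + 1) :
    ((doors N c m).card : ZMod 2) = (full N c (m + 1)).card := by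
  rw [doors, full, Finset.card_filter, Finset.card_filter, Finset.sum_product, Nat.cast_sum,
    Nat.cast_sum]
  refine Finset.sum_congr rfl fun p hp => ?_
  rw [← Finset.card_filter, card_facets m (fun i => c (vert p.1 p.2 i))]
  · push_cast
    rfl
  · intro i hi
    -- a color `j + 1` with `j ≥ m + 1` is excluded because `v j = 0` on the cell
    by_contra hge
    push Not at hge
    have hle := hcn (vert p.1 p.2 i)
    have hj : c (vert p.1 p.2 i) - 1 < n := by omega
    have := (mem_cells.1 hp).2 ⟨c (vert p.1 p.2 i) - 1, hj⟩ (by simp; omega)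
    refine hc1 _ (vert_le hp i) ⟨c (vert p.1 p.2 i) - 1, hj⟩ ?_ (by simp; omega)
    rw [vert, this.1, this.2]
    simp only
    rw [if_neg (by omega)]

/-- Odd number of fully colored `m`-cells, by induction on `m`; for `m = 0` the only one is the
origin, where every color but `0` is forbidden. -/
lemma card_full (hN : 1 ≤ N) (hcn : ∀ v, c v ≤ n)
    (hc1 : ∀ v : Fin n → ℕ, (∀ j, v j ≤ N) → ∀ i : Fin n, v i = 0 → c v ≠ (i : ℕ) + 1)
    (hc0 : ∀ v : Fin n → ℕ, (∀ j, v j ≤ N) → (∃ i, v i = N) → c v ≠ 0) (m : ℕ) (hm : m ≤ n) :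
    ((full N c m).card : ZMod 2) = 1 := by
  induction m with
  | zero =>
    have : full N c 0 = {(fun _ => 0, Equiv.refl _)} := by
      ext ⟨x, τ⟩
      simp only [full, mem_filter, mem_cells, mem_singleton, Prod.mk.injEq]
      constructor
      · rintro ⟨⟨-, h⟩, -⟩
        exact ⟨funext fun j => (h j (by omega)).1, Equiv.ext fun j => (h j (by omega)).2⟩
      · rintro ⟨rfl, rfl⟩
        refine ⟨⟨fun _ => hN, fun i _ => ⟨rfl, rfl⟩⟩, ?_⟩
        have h0 : c (fun _ => 0) = 0 := by
          by_contra hne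
          have hle := hcn (fun _ => 0)
          exact hc1 (fun _ => 0) (fun _ => by omega) ⟨c (fun _ => 0) - 1, by omega⟩ rfl
            (by simp; omega)
        have hv : vert (fun _ : Fin n => 0) (Equiv.refl _) 0 = fun _ => 0 := by
          funext j; simp [vert]
        simp [hv, h0]
    simp [this]
  | succ m ih =>
    rw [← card_doors_eq_full_succ hcn hc1,
      ← ih (by omega)]
    exact card_doors_eq_full ⟨m, by omega⟩ hc1 hc0

end Coloring

end SpernerCube

/-- Sperner's lemma for the cube: for every Sperner coloring `c` of the vertices
`{0, …, N}^n` of Kuhn's triangulation of `[0,N]^n` with colors `{0, …, n}` (where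
`c v ≠ i` whenever the `i`-th coordinate of `v` is `0`, and `c v ≠ 0` whenever some
coordinate of `v` equals `N`), there is a panchromatic cell: a cell whose `n+1` vertices
receive all `n+1` colors. -/
theorem sperner_cube (n N : ℕ) (hn : 1 ≤ n) (hN : 1 ≤ N)
    (c : (Fin n → ℕ) → Fin (n + 1))
    (hc1 : ∀ v : Fin n → ℕ, (∀ j, v j ≤ N) → ∀ i : Fin n, v i = 0 →
      (c v : ℕ) ≠ (i : ℕ) + 1)
    (hc0 : ∀ v : Fin n → ℕ, (∀ j, v j ≤ N) → (∃ i, v i = N) → c v ≠ 0) :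
    ∃ (x : Fin n → ℕ) (σ : Equiv.Perm (Fin n)), (∀ j, x j ≤ N - 1) ∧
      Function.Injective (fun k : Fin (n + 1) => c (cellVertex x σ k.val)) := by
  have hodd := SpernerCube.card_full (c := fun v => (c v : ℕ)) hN
    (fun v => Nat.lt_succ_iff.1 (c v).isLt) hc1
    (fun v hv h e => hc0 v hv h (Fin.ext e)) n le_rfl
  have hne : (SpernerCube.full N (fun v => (c v : ℕ)) n).Nonempty := by
    rw [Finset.nonempty_iff_ne_empty]
    intro h
    simp [h] at hodd
  obtain ⟨⟨x, τ⟩, hp⟩ := hne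
  obtain ⟨hcell, him⟩ := Finset.mem_filter.1 hp
  have hinj : Set.InjOn (fun i => (c (SpernerCube.vert x τ i) : ℕ)) (Finset.range (n + 1)) := by
    rw [← Finset.card_image_iff, him]
  refine ⟨x, τ.symm, fun j => ?_, fun a b hab => ?_⟩
  · have := (SpernerCube.mem_cells.1 hcell).1 j
    simp only at this
    omega
  · simp only [SpernerCube.cellVertex_eq_vert] at hab
    exact Fin.ext (hinj (Finset.mem_range.2 a.isLt) (Finset.mem_range.2 b.isLt) (congrArg Fin.val hab))
end
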